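/- For every 𝒜 ⊆ {M, C, N}, contraction is admissible in the calculus LNS_E𝒜: if S{Γ, A, A ⇒ Δ} (respectively S{Γ ⇒ Δ, A, A}) is derivable in LNS_E𝒜, then S{Γ, A ⇒ Δ} (respectively S{Γ ⇒ Δ, A}) is derivable in LNS_E𝒜. -/

import Mathlib

/-- Monomodal formulas. -/
inductive Fm : Type
  | var : ℕ → Fm
  | bot : Fm
  | top : Fm
  | neg : Fm → Fm
  | and : Fm → Fm → Fm
  | or : Fm → Fm → Fm
  | imp : Fm → Fm → Fm
  | box : Fm → Fm

/-- Evaluation of the propositional structure of a formula under an assignment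
`v` of truth values to formulas (only used on atoms, i.e. propositional
variables and boxed formulas). -/
def evalP (v : Fm → Prop) : Fm → Prop
  | .var n => v (.var n)
  | .bot => False
  | .top => True
  | .neg A => ¬ evalP v A
  | .and A B => evalP v A ∧ evalP v B
  | .or A B => evalP v A ∨ evalP v B
  | .imp A B => evalP v A → evalP v B
  | .box A => v (.box A)

/-- `A` is an instance of a classical propositional tautology. -/
def Taut (A : Fm) : Prop := ∀ v, evalP v A

/-- A component of a (linear nested) sequent: a two-sided multiset sequent. -/
abbrev Cmp := Multiset Fm × Multiset Fm

/-- A set `𝒜 ⊆ {M, C, N}` of additional axioms for classical modal logic `E`. -/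
structure EAx where
  m : Bool := false
  c : Bool := false
  n : Bool := false

/-- Hilbert-style theoremhood in the non-normal modal logic `E𝒜`: classical
propositional logic, the congruence rule, and the axioms among
`M : □(A∧B) → (□A ∧ □B)`, `C : (□A ∧ □B) → □(A∧B)` and `N : □⊤` in `𝒜`. -/
inductive EThm (Ax : EAx) : Fm → Prop
  | taut {A} : Taut A → EThm Ax A
  | mp {A B} : EThm Ax (.imp A B) → EThm Ax A → EThm Ax B
  | cong {A B} : EThm Ax (.imp A B) → EThm Ax (.imp B A) →
      EThm Ax (.imp (.box A) (.box B))
  | axM {A B} : Ax.m = true →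
      EThm Ax (.imp (.box (.and A B)) (.and (.box A) (.box B)))
  | axC {A B} : Ax.c = true →
      EThm Ax (.imp (.and (.box A) (.box B)) (.box (.and A B)))
  | axN : Ax.n = true → EThm Ax (.box .top)

/-- A linear nested sequent of type `LNS^e`: a (nonempty) list of components
joined by the nesting `⫽`, optionally terminated by a binary nesting
`⫽ᵉ(Σ ⇒ Π; Ω ⇒ Θ)`. -/
abbrev LNSe := List Cmp × Option (Cmp × Cmp)

/-- The linear nested sequent calculus `LNS_E𝒜` for non-normal modal logics,
optionally extended with internal contraction (`con`) and weakening (`wk`):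
classical propositional rules applied in any component (but not inside `⫽ᵉ`),
the modal rules `□_R^e` and `□_L^e`, and the rules `N`, `M`, `C` for the
corresponding axioms in `𝒜`. -/
inductive ED (Ax : EAx) (con wk : Bool) : LNSe → Prop
  | init {pre post : List Cmp} {ep} {Γ Δ : Multiset Fm} {m : ℕ} :
      ED Ax con wk (pre ++ (Fm.var m ::ₘ Γ, Fm.var m ::ₘ Δ) :: post, ep)
  | botL {pre post ep Γ Δ} :
      ED Ax con wk (pre ++ (Fm.bot ::ₘ Γ, Δ) :: post, ep)
  | topR {pre post ep Γ Δ} :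
      ED Ax con wk (pre ++ (Γ, Fm.top ::ₘ Δ) :: post, ep)
  | negL {pre post ep Γ Δ A} :
      ED Ax con wk (pre ++ (Γ, A ::ₘ Δ) :: post, ep) →
      ED Ax con wk (pre ++ (Fm.neg A ::ₘ Γ, Δ) :: post, ep)
  | negR {pre post ep Γ Δ A} :
      ED Ax con wk (pre ++ (A ::ₘ Γ, Δ) :: post, ep) →
      ED Ax con wk (pre ++ (Γ, Fm.neg A ::ₘ Δ) :: post, ep)
  | andL {pre post ep Γ Δ A B} :
      ED Ax con wk (pre ++ (A ::ₘ B ::ₘ Γ, Δ) :: post, ep) →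
      ED Ax con wk (pre ++ (Fm.and A B ::ₘ Γ, Δ) :: post, ep)
  | andR {pre post ep Γ Δ A B} :
      ED Ax con wk (pre ++ (Γ, A ::ₘ Δ) :: post, ep) →
      ED Ax con wk (pre ++ (Γ, B ::ₘ Δ) :: post, ep) →
      ED Ax con wk (pre ++ (Γ, Fm.and A B ::ₘ Δ) :: post, ep)
  | orL {pre post ep Γ Δ A B} :
      ED Ax con wk (pre ++ (A ::ₘ Γ, Δ) :: post, ep) →
      ED Ax con wk (pre ++ (B ::ₘ Γ, Δ) :: post, ep) →
      ED Ax con wk (pre ++ (Fm.or A B ::ₘ Γ, Δ) :: post, ep)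
  | orR {pre post ep Γ Δ A B} :
      ED Ax con wk (pre ++ (Γ, A ::ₘ B ::ₘ Δ) :: post, ep) →
      ED Ax con wk (pre ++ (Γ, Fm.or A B ::ₘ Δ) :: post, ep)
  | impL {pre post ep Γ Δ A B} :
      ED Ax con wk (pre ++ (B ::ₘ Γ, Δ) :: post, ep) →
      ED Ax con wk (pre ++ (Γ, A ::ₘ Δ) :: post, ep) →
      ED Ax con wk (pre ++ (Fm.imp A B ::ₘ Γ, Δ) :: post, ep)
  | impR {pre post ep Γ Δ A B} :
      ED Ax con wk (pre ++ (A ::ₘ Γ, B ::ₘ Δ) :: post, ep) →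
      ED Ax con wk (pre ++ (Γ, Fm.imp A B ::ₘ Δ) :: post, ep)
  | conL {pre post ep Γ Δ A} : con = true →
      ED Ax con wk (pre ++ (A ::ₘ A ::ₘ Γ, Δ) :: post, ep) →
      ED Ax con wk (pre ++ (A ::ₘ Γ, Δ) :: post, ep)
  | conR {pre post ep Γ Δ A} : con = true →
      ED Ax con wk (pre ++ (Γ, A ::ₘ A ::ₘ Δ) :: post, ep) →
      ED Ax con wk (pre ++ (Γ, A ::ₘ Δ) :: post, ep)
  | wkL {pre post ep Γ Δ A} : wk = true →
      ED Ax con wk (pre ++ (Γ, Δ) :: post, ep) →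
      ED Ax con wk (pre ++ (A ::ₘ Γ, Δ) :: post, ep)
  | wkR {pre post ep Γ Δ A} : wk = true →
      ED Ax con wk (pre ++ (Γ, Δ) :: post, ep) →
      ED Ax con wk (pre ++ (Γ, A ::ₘ Δ) :: post, ep)
  | boxRe {G Γ Δ B} :
      ED Ax con wk (G ++ [(Γ, Δ)], some ((0, {B}), ({B}, 0))) →
      ED Ax con wk (G ++ [(Γ, Fm.box B ::ₘ Δ)], none)
  | boxLe {G Γ Δ Sg Pp Om Th A} :
      ED Ax con wk (G ++ [(Γ, Δ), (A ::ₘ Sg, Pp)], none) →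
      ED Ax con wk (G ++ [(Γ, Δ), (Om, A ::ₘ Th)], none) →
      ED Ax con wk (G ++ [(Fm.box A ::ₘ Γ, Δ)], some ((Sg, Pp), (Om, Th)))
  | ruleN {G Γ Δ B} : Ax.n = true →
      ED Ax con wk (G ++ [(Γ, Δ), (0, {B})], none) →
      ED Ax con wk (G ++ [(Γ, Fm.box B ::ₘ Δ)], none)
  | ruleM {c G Sg Pp Om Th} : Ax.m = true →
      ED Ax con wk (c :: G, some ((Sg, Pp), (Fm.bot ::ₘ Om, Th))) →
      ED Ax con wk (c :: G, some ((Sg, Pp), (Om, Th)))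
  | ruleC {G Γ Δ Sg Pp Om Th A} : Ax.c = true →
      ED Ax con wk (G ++ [(Γ, Δ)], some ((A ::ₘ Sg, Pp), (Om, Th))) →
      ED Ax con wk (G ++ [(Γ, Δ), (Om, A ::ₘ Th)], none) →
      ED Ax con wk (G ++ [(Fm.box A ::ₘ Γ, Δ)], some ((Sg, Pp), (Om, Th)))

/-!
The calculus, possibly with contraction and weakening, is shown sound and complete for a semantics
that looks at the two sides of a component only through membership. Propositional rules decompose a
component into the four-valued valuations refuting it, and derivability amounts to each of these
valuations being closed: by a clash on a variable, or, in the last component, by modal rules.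
Contraction and weakening are plainly sound, while completeness produces derivations without them.
-/

/-- A four-valued valuation in the sense of Belnap and Dunn: an atom, i.e. a propositional variable
or a boxed formula, may be asserted, denied, both, or neither. Compound propositional formulas in
the two sets are ignored. -/
structure DunnValuation where
  asserted : Set Fm
  denied : Set Fm

namespace DunnValuation

mutual

/-- `v` makes the formula at least true. -/
@[simp]
def Verifies (v : DunnValuation) : Fm → Prop
  | .var n => .var n ∈ v.asserted
  | .bot => False
  | .top => True
  | .neg A => v.Falsifies A
  | .and A B => v.Verifies A ∧ v.Verifies B
  | .or A B => v.Verifies A ∨ v.Verifies B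
  | .imp A B => v.Falsifies A ∨ v.Verifies B
  | .box A => .box A ∈ v.asserted

/-- `v` makes the formula at least false. -/
@[simp]
def Falsifies (v : DunnValuation) : Fm → Prop
  | .var n => .var n ∈ v.denied
  | .bot => True
  | .top => False
  | .neg A => v.Verifies A
  | .and A B => v.Falsifies A ∨ v.Falsifies B
  | .or A B => v.Falsifies A ∧ v.Falsifies B
  | .imp A B => v.Verifies A ∧ v.Falsifies B
  | .box A => .box A ∈ v.denied

end

/-- `v` is a countermodel of the component `c`. -/
def Refutes (v : DunnValuation) (c : Cmp) : Prop :=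
  (∀ A ∈ c.1, v.Verifies A) ∧ ∀ A ∈ c.2, v.Falsifies A

/-- Some propositional variable is both asserted and denied by `v`; boxed formulas do not count,
since initial sequents are atomic. -/
def Clash (v : DunnValuation) : Prop :=
  ∃ m, Fm.var m ∈ v.asserted ∧ Fm.var m ∈ v.denied

/-- The valuation asserting the antecedent and denying the succedent of a component. -/
def ofCmp (c : Cmp) : DunnValuation where
  asserted := {A | A ∈ c.1}
  denied := {A | A ∈ c.2}

@[simp]
theorem refutes_cons_left {v : DunnValuation} {A : Fm} {Γ Δ : Multiset Fm} :
    v.Refutes (A ::ₘ Γ, Δ) ↔ v.Verifies A ∧ v.Refutes (Γ, Δ) := by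
  simp [Refutes, and_assoc]

@[simp]
theorem refutes_cons_right {v : DunnValuation} {A : Fm} {Γ Δ : Multiset Fm} :
    v.Refutes (Γ, A ::ₘ Δ) ↔ v.Falsifies A ∧ v.Refutes (Γ, Δ) := by
  simp [Refutes, and_left_comm]

theorem Refutes.mono {v : DunnValuation} {c d : Cmp} (hv : v.Refutes d)
    (hl : c.1 ⊆ d.1) (hr : c.2 ⊆ d.2) : v.Refutes c :=
  ⟨fun A hA ↦ hv.1 A (hl hA), fun A hA ↦ hv.2 A (hr hA)⟩

end DunnValuation

open DunnValuation

/-- Every countermodel of the component `c` satisfies `K`. -/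
def ValidModulo (K : DunnValuation → Prop) (c : Cmp) : Prop :=
  ∀ v : DunnValuation, v.Refutes c → K v

/-- The boxed formulas asserted by `v` suffice to discharge the binary nesting `⫽ᵉ e`, given that
the components in `V` are derivable: `S` collects the formulas `A` whose `□A` is principal in the
rules `C` and the concluding `□_L^e`. The components of the second kind are discharged by the rule
`M` when it is available. -/
def Discharges (Ax : EAx) (V : Set Cmp) (v : DunnValuation) (e : Cmp × Cmp) : Prop :=
  -- `S` is a finset rather than a multiset: no box ever has to be used twice.
  ∃ S : Finset Fm, S.Nonempty ∧ (Ax.c = true ∨ S.card ≤ 1) ∧ (∀ A ∈ S, Fm.box A ∈ v.asserted) ∧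
    (S.val + e.1.1, e.1.2) ∈ V ∧ (Ax.m = false → ∀ A ∈ S, (e.2.1, A ::ₘ e.2.2) ∈ V)

/-- The valuations that are closed as countermodels of the last component of a linear nested
sequent with no binary nesting. In `boxR` the set `V` stands for the components all of whose
countermodels are closed, which keeps the occurrences of `Closed` strictly positive. -/
inductive Closed (Ax : EAx) : DunnValuation → Prop
  | clash {v} : v.Clash → Closed Ax v
  | ruleN {v B} : Ax.n = true → Fm.box B ∈ v.denied →
      (∀ w : DunnValuation, w.Refutes (0, {B}) → Closed Ax w) → Closed Ax v
  | boxR {v B} {V : Set Cmp} : Fm.box B ∈ v.denied →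
      (∀ c ∈ V, ∀ w : DunnValuation, w.Refutes c → Closed Ax w) →
      Discharges Ax V v ((0, {B}), ({B}, 0)) → Closed Ax v

/-- The valuations that are closed as countermodels of a component followed by the components
`post` and the binary nesting `ep`. Only the last component may use the modal rules. -/
def ClosedAt (Ax : EAx) (ep : Option (Cmp × Cmp)) (post : List Cmp) (v : DunnValuation) : Prop :=
  match post, ep with
  | [], none => Closed Ax v
  | [], some e => v.Clash ∨ Discharges Ax {c | ValidModulo (Closed Ax) c} v e
  | _ :: _, _ => v.Clash

/-- Validity of a linear nested sequent: all countermodels of one of its components are closed. -/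
def LNSValid (Ax : EAx) (ep : Option (Cmp × Cmp)) : List Cmp → Prop
  | [] => False
  | c :: post => ValidModulo (ClosedAt Ax ep post) c ∨ LNSValid Ax ep post

section Soundness

variable {Ax : EAx} {ep : Option (Cmp × Cmp)} {pre post G : List Cmp} {c : Cmp}
  {Γ Δ Sg Pp Om Th : Multiset Fm} {A B : Fm}

theorem ClosedAt.of_clash {v : DunnValuation} (hv : v.Clash) : ClosedAt Ax ep post v :=
  match post, ep with
  | [], none => .clash hv
  | [], some _ => .inl hv
  | _ :: _, _ => hv

theorem lnsValid_append_cons : LNSValid Ax ep (pre ++ c :: post) ↔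
    (∃ d ∈ pre, ValidModulo Clash d) ∨ ValidModulo (ClosedAt Ax ep post) c ∨
      LNSValid Ax ep post := by
  induction pre with
  | nil => simp [LNSValid]
  | cons d pre ih =>
    have closedAt_eq : ClosedAt Ax ep (pre ++ c :: post) = Clash := by cases pre <;> rfl
    simp only [List.cons_append, LNSValid, ih, closedAt_eq, List.exists_mem_cons_iff, or_assoc]

theorem LNSValid.of_clash (h : ValidModulo Clash c) : LNSValid Ax ep (pre ++ c :: post) :=
  lnsValid_append_cons.2 <| .inr <| .inl fun v hv ↦ .of_clash (h v hv)

theorem LNSValid.of_refutes_or {c₁ c₂ : Cmp} (h₁ : LNSValid Ax ep (pre ++ c₁ :: post))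
    (h₂ : LNSValid Ax ep (pre ++ c₂ :: post))
    (h : ∀ v : DunnValuation, v.Refutes c → v.Refutes c₁ ∨ v.Refutes c₂) :
    LNSValid Ax ep (pre ++ c :: post) := by
  rw [lnsValid_append_cons] at *
  rcases h₁ with h₁ | h₁ | h₁
  · exact .inl h₁
  · refine h₂.imp_right (.imp_left fun h₂ v hv ↦ ?_)
    exact (h v hv).elim (h₁ v) (h₂ v)
  · exact .inr (.inr h₁)

theorem LNSValid.of_refutes {c₁ : Cmp} (h₁ : LNSValid Ax ep (pre ++ c₁ :: post))
    (h : ∀ v : DunnValuation, v.Refutes c → v.Refutes c₁) : LNSValid Ax ep (pre ++ c :: post) :=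
  h₁.of_refutes_or h₁ fun v hv ↦ .inl (h v hv)

theorem LNSValid.mono_nesting {ep' : Option (Cmp × Cmp)} {L : List Cmp}
    (h : ∀ v, ClosedAt Ax ep [] v → ClosedAt Ax ep' [] v) (hL : LNSValid Ax ep L) :
    LNSValid Ax ep' L := by
  induction L with
  | nil => exact hL
  | cons c post ih =>
    refine hL.imp (fun hc v hv ↦ ?_) ih
    cases post with
    | nil => exact h v (hc v hv)
    | cons d post => exact hc v hv

theorem lnsValid_append_singleton : LNSValid Ax ep (G ++ [c]) ↔
    (∃ d ∈ G, ValidModulo Clash d) ∨ ValidModulo (ClosedAt Ax ep []) c := by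
  simp [lnsValid_append_cons, LNSValid]

theorem lnsValid_append_pair {d : Cmp} : LNSValid Ax none (G ++ [c, d]) ↔
    (∃ d ∈ G, ValidModulo Clash d) ∨ ValidModulo Clash c ∨ ValidModulo (Closed Ax) d := by
  simp only [lnsValid_append_cons, LNSValid, or_false]
  rfl

theorem Discharges.boxLe {V : Set Cmp} {v : DunnValuation} (hA : Fm.box A ∈ v.asserted)
    (h₁ : (A ::ₘ Sg, Pp) ∈ V) (h₂ : (Om, A ::ₘ Th) ∈ V) :
    Discharges Ax V v ((Sg, Pp), (Om, Th)) :=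
  ⟨{A}, by simp, by simp, by simpa, by simpa, by simpa using fun _ ↦ h₂⟩

theorem Discharges.ruleC {v : DunnValuation} (hC : Ax.c = true)
    (hA : Fm.box A ∈ v.asserted) (h₂ : ValidModulo (Closed Ax) (Om, A ::ₘ Th))
    (h₁ : Discharges Ax {c | ValidModulo (Closed Ax) c} v ((A ::ₘ Sg, Pp), (Om, Th))) :
    Discharges Ax {c | ValidModulo (Closed Ax) c} v ((Sg, Pp), (Om, Th)) := by
  classical
  obtain ⟨S, -, -, hbox, hl, hr⟩ := h₁
  refine ⟨insert A S, S.insert_nonempty A, .inl hC, ?_, fun w hw ↦ hl w ?_, fun hM ↦ ?_⟩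
  · simpa using ⟨hA, hbox⟩
  · exact hw.mono (fun B hB ↦ by simpa [or_assoc, or_left_comm] using hB) (Multiset.Subset.refl _)
  · simpa using ⟨h₂, hr hM⟩

theorem LNSValid.boxRe (h : LNSValid Ax (some ((0, {B}), ({B}, 0))) (G ++ [(Γ, Δ)])) :
    LNSValid Ax none (G ++ [(Γ, Fm.box B ::ₘ Δ)]) := by
  rw [lnsValid_append_singleton] at *
  refine h.imp_right fun h v hv ↦ ?_
  rw [refutes_cons_right] at hv
  exact (h v hv.2).elim .clash (.boxR hv.1 fun _ hc ↦ hc)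

theorem LNSValid.ruleN (hN : Ax.n = true) (h : LNSValid Ax none (G ++ [(Γ, Δ), (0, {B})])) :
    LNSValid Ax none (G ++ [(Γ, Fm.box B ::ₘ Δ)]) := by
  rw [lnsValid_append_pair] at h
  rw [lnsValid_append_singleton]
  refine h.imp_right fun h v hv ↦ ?_
  rw [refutes_cons_right] at hv
  exact h.elim (fun h ↦ .clash (h v hv.2)) (.ruleN hN hv.1)

theorem LNSValid.ruleM (hM : Ax.m = true) {L : List Cmp}
    (h : LNSValid Ax (some ((Sg, Pp), (Fm.bot ::ₘ Om, Th))) L) :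
    LNSValid Ax (some ((Sg, Pp), (Om, Th))) L := by
  refine h.mono_nesting fun v hv ↦ ?_
  rcases hv with hv | ⟨S, hne, hC, hbox, hl, -⟩
  · exact .inl hv
  · exact .inr ⟨S, hne, hC, hbox, hl, by simp [hM]⟩

theorem LNSValid.boxLe (h₁ : LNSValid Ax none (G ++ [(Γ, Δ), (A ::ₘ Sg, Pp)]))
    (h₂ : LNSValid Ax none (G ++ [(Γ, Δ), (Om, A ::ₘ Th)])) :
    LNSValid Ax (some ((Sg, Pp), (Om, Th))) (G ++ [(Fm.box A ::ₘ Γ, Δ)]) := by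
  rw [lnsValid_append_pair] at h₁ h₂
  rw [lnsValid_append_singleton]
  refine or_iff_not_imp_left.2 fun hG v hv ↦ ?_
  rw [refutes_cons_left] at hv
  rcases h₁.resolve_left hG, h₂.resolve_left hG with ⟨h₁ | h₁, h₂ | h₂⟩
  · exact .inl (h₁ v hv.2)
  · exact .inl (h₁ v hv.2)
  · exact .inl (h₂ v hv.2)
  · exact .inr (.boxLe hv.1 h₁ h₂)

theorem LNSValid.ruleC (hC : Ax.c = true)
    (h₁ : LNSValid Ax (some ((A ::ₘ Sg, Pp), (Om, Th))) (G ++ [(Γ, Δ)]))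
    (h₂ : LNSValid Ax none (G ++ [(Γ, Δ), (Om, A ::ₘ Th)])) :
    LNSValid Ax (some ((Sg, Pp), (Om, Th))) (G ++ [(Fm.box A ::ₘ Γ, Δ)]) := by
  rw [lnsValid_append_pair] at h₂
  rw [lnsValid_append_singleton] at *
  refine or_iff_not_imp_left.2 fun hG v hv ↦ ?_
  rw [refutes_cons_left] at hv
  rcases h₂.resolve_left hG with h₂ | h₂
  · exact .inl (h₂ v hv.2)
  · exact (h₁.resolve_left hG v hv.2).imp_right (.ruleC hC hv.1 h₂)

theorem ED.lnsValid {con wk : Bool} {s : LNSe} (h : ED Ax con wk s) : LNSValid Ax s.2 s.1 := by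
  induction h with
  | init => exact .of_clash fun v hv ↦ ⟨_, hv.1 _ (Multiset.mem_cons_self _ _),
      hv.2 _ (Multiset.mem_cons_self _ _)⟩
  | botL | topR => exact .of_clash fun v hv ↦ by simp at hv
  | negL _ ih | negR _ ih | andL _ ih | orR _ ih | impR _ ih | conL _ _ ih | conR _ _ ih
  | wkL _ _ ih | wkR _ _ ih =>
    exact ih.of_refutes fun v hv ↦ by
      grind [Verifies, Falsifies, refutes_cons_left, refutes_cons_right]
  | andR _ _ ih₁ ih₂ | orL _ _ ih₁ ih₂ | impL _ _ ih₁ ih₂ =>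
    exact ih₁.of_refutes_or ih₂ fun v hv ↦ by
      grind [Verifies, Falsifies, refutes_cons_left, refutes_cons_right]
  | boxRe _ ih => exact ih.boxRe
  | boxLe _ _ ih₁ ih₂ => exact ih₁.boxLe ih₂
  | ruleN hN _ ih => exact ih.ruleN hN
  | ruleM hM _ ih => exact ih.ruleM hM
  | ruleC hC _ _ ih₁ ih₂ => exact ih₁.ruleC hC ih₂

end Soundness

section Completeness

variable {Ax : EAx} {con wk : Bool} {ep : Option (Cmp × Cmp)} {pre post G : List Cmp} {c : Cmp}
  {Γ Δ Sg Pp Om Th : Multiset Fm} {A : Fm}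

/-- The total size of the formulas of a component, which decreases from the conclusion to the
premisses of every propositional rule. -/
noncomputable def cmpSize (c : Cmp) : ℕ := (c.1.map sizeOf).sum + (c.2.map sizeOf).sum

theorem cmpSize_cons_left : cmpSize (A ::ₘ Γ, Δ) = sizeOf A + cmpSize (Γ, Δ) := by
  simp [cmpSize, add_assoc]

theorem cmpSize_cons_right : cmpSize (Γ, A ::ₘ Δ) = sizeOf A + cmpSize (Γ, Δ) := by
  simp [cmpSize, add_left_comm]

theorem ED.of_not_verifies (hA : ¬ (ofCmp (A ::ₘ Γ, Δ)).Verifies A)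
    (ih : ∀ c, cmpSize c < cmpSize (A ::ₘ Γ, Δ) →
      (∀ v : DunnValuation, v.Refutes c → v.Refutes (A ::ₘ Γ, Δ)) →
      ED Ax con wk (pre ++ c :: post, ep)) :
    ED Ax con wk (pre ++ (A ::ₘ Γ, Δ) :: post, ep) := by
  cases A
  case var | top | box => simp [ofCmp] at hA
  case bot => exact .botL
  case' neg => refine .negL (ih _ ?_ ?_)
  case' and => refine .andL (ih _ ?_ ?_)
  case' or => refine .orL (ih _ ?_ ?_) (ih _ ?_ ?_)
  case' imp => refine .impL (ih _ ?_ ?_) (ih _ ?_ ?_)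
  all_goals grind [cmpSize_cons_left, cmpSize_cons_right, Verifies, Falsifies, refutes_cons_left,
    refutes_cons_right]

theorem ED.of_not_falsifies (hA : ¬ (ofCmp (Γ, A ::ₘ Δ)).Falsifies A)
    (ih : ∀ c, cmpSize c < cmpSize (Γ, A ::ₘ Δ) →
      (∀ v : DunnValuation, v.Refutes c → v.Refutes (Γ, A ::ₘ Δ)) →
      ED Ax con wk (pre ++ c :: post, ep)) :
    ED Ax con wk (pre ++ (Γ, A ::ₘ Δ) :: post, ep) := by
  cases A
  case var | bot | box => simp [ofCmp] at hA
  case top => exact .topR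
  case' neg => refine .negR (ih _ ?_ ?_)
  case' and => refine .andR (ih _ ?_ ?_) (ih _ ?_ ?_)
  case' or => refine .orR (ih _ ?_ ?_)
  case' imp => refine .impR (ih _ ?_ ?_)
  all_goals grind [cmpSize_cons_left, cmpSize_cons_right, Verifies, Falsifies, refutes_cons_left,
    refutes_cons_right]

/-- Backward proof search with the propositional rules stops at the components `d` refuted by their
own valuation; as the rules are invertible, these valuations refute `c` too. -/
theorem ED.of_forall_refutes
    (h : ∀ d, (ofCmp d).Refutes c → ED Ax con wk (pre ++ d :: post, ep)) :
    ED Ax con wk (pre ++ c :: post, ep) := by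
  induction hn : cmpSize c using Nat.strong_induction_on generalizing c with
  | _ n ih =>
    subst hn
    have reduce (d : Cmp) (hlt : cmpSize d < cmpSize c)
        (hd : ∀ v : DunnValuation, v.Refutes d → v.Refutes c) :
        ED Ax con wk (pre ++ d :: post, ep) :=
      ih _ hlt (fun d' hd' ↦ h d' (hd _ hd')) rfl
    by_cases hc : (ofCmp c).Refutes c
    · exact h c hc
    obtain ⟨Γ, Δ⟩ := c
    simp only [Refutes, not_and_or, not_forall] at hc
    rcases hc with ⟨A, hA, hv⟩ | ⟨A, hA, hv⟩ <;> obtain ⟨_, rfl⟩ := Multiset.exists_cons_of_mem hA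
    · exact .of_not_verifies hv reduce
    · exact .of_not_falsifies hv reduce

theorem ED.of_clash (h : (ofCmp c).Clash) : ED Ax con wk (pre ++ c :: post, ep) := by
  obtain ⟨Γ, Δ⟩ := c
  obtain ⟨m, hΓ, hΔ⟩ := h
  obtain ⟨Γ, rfl⟩ := Multiset.exists_cons_of_mem hΓ
  obtain ⟨Δ, rfl⟩ := Multiset.exists_cons_of_mem hΔ
  exact .init

theorem ED.of_boxes {S : Multiset Fm} (hS : S ≠ 0) (hC : Ax.c = true ∨ S.card ≤ 1)
    (hl : ∀ G, ED Ax con wk (G ++ [(S + Sg, Pp)], none))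
    (hr : ∀ A ∈ S, ∀ G, ED Ax con wk (G ++ [(Om, A ::ₘ Th)], none)) :
    ED Ax con wk (G ++ [(S.map Fm.box + Γ, Δ)], some ((Sg, Pp), (Om, Th))) := by
  induction S using Multiset.induction_on generalizing Sg with
  | empty => exact absurd rfl hS
  | cons A S ih =>
    have right : ED Ax con wk (G ++ [(S.map Fm.box + Γ, Δ), (Om, A ::ₘ Th)], none) := by
      simpa using hr A (by simp) (G ++ [(S.map Fm.box + Γ, Δ)])
    rw [Multiset.map_cons, Multiset.cons_add]
    rcases eq_or_ne S 0 with rfl | hS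
    · exact .boxLe (by simpa using hl (G ++ [(Γ, Δ)])) right
    · have hC : Ax.c = true := hC.resolve_right (by simpa using hS)
      exact .ruleC hC
        (ih hS (.inl hC) (by simpa using hl) fun B hB ↦ hr B (Multiset.mem_cons_of_mem hB)) right

theorem ED.of_discharges {V : Set Cmp} {e : Cmp × Cmp}
    (hV : ∀ c ∈ V, ∀ G, ED Ax con wk (G ++ [c], none))
    (h : Discharges Ax V (ofCmp (Γ, Δ)) e) : ED Ax con wk (G ++ [(Γ, Δ)], some e) := by
  obtain ⟨⟨Sg, Pp⟩, Om, Th⟩ := e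
  obtain ⟨S, hne, hC, hbox, hl, hr⟩ := h
  have hS : S.val ≠ 0 := by simpa using hne.ne_empty
  have hle : S.val.map Fm.box ≤ Γ := by
    rw [Multiset.le_iff_subset (S.nodup.map fun _ _ ↦ Fm.box.inj), Multiset.subset_iff]
    simpa [ofCmp] using hbox
  obtain ⟨Γ, rfl⟩ := Multiset.le_iff_exists_add.1 hle
  cases hM : Ax.m with
  | false => exact .of_boxes hS hC (hV _ hl) fun A hA ↦ hV _ (hr hM A hA)
  | true =>
    have with_bot := of_boxes (con := con) (wk := wk) (G := G) (Γ := Γ) (Δ := Δ) (Om := .bot ::ₘ Om)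
      (Th := Th) hS hC (hV _ hl) fun A _ G ↦ .botL
    cases G <;> exact .ruleM hM with_bot

theorem ED.of_closed (hc : Closed Ax (ofCmp c)) : ED Ax con wk (G ++ [c], none) := by
  generalize hv : ofCmp c = v at hc
  induction hc generalizing G c with
  | clash h => exact .of_clash (hv ▸ h)
  | ruleN hN hB _ ih =>
    subst hv
    obtain ⟨Γ, Δ⟩ := c
    obtain ⟨Δ, rfl⟩ := Multiset.exists_cons_of_mem hB
    refine .ruleN hN ?_
    simpa using of_forall_refutes (pre := G ++ [(Γ, Δ)]) (post := []) fun d hd ↦ ih _ hd rfl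
  | boxR hB _ hD ih =>
    subst hv
    obtain ⟨Γ, Δ⟩ := c
    obtain ⟨Δ, rfl⟩ := Multiset.exists_cons_of_mem hB
    exact .boxRe (.of_discharges (fun c hc G ↦ .of_forall_refutes fun d hd ↦ ih c hc _ hd rfl) hD)

theorem ED.of_closedAt (hc : ClosedAt Ax ep post (ofCmp c)) :
    ED Ax con wk (pre ++ c :: post, ep) :=
  match post, ep, hc with
  | [], none, hc => .of_closed hc
  | [], some _, .inl hc => .of_clash hc
  | [], some _, .inr hD =>
    .of_discharges (fun c (hc : ValidModulo _ c) _ ↦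
      .of_forall_refutes fun _ hd ↦ .of_closed (hc _ hd)) hD
  | _ :: _, _, hc => .of_clash hc

theorem ED.of_lnsValid {L : List Cmp} (h : LNSValid Ax ep L) : ED Ax con wk (pre ++ L, ep) := by
  induction L generalizing pre with
  | nil => exact h.elim
  | cons c post ih =>
    rcases h with h | h
    · exact .of_forall_refutes fun d hd ↦ .of_closedAt (h _ hd)
    · simpa using ih (pre := pre ++ [c]) h

end Completeness

theorem contraction_admissible_general {Ax : EAx} {con wk con' wk' : Bool} {s : LNSe}
    (h : ED Ax con wk s) : ED Ax con' wk' s :=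
  .of_lnsValid (pre := []) h.lnsValid

/-- Admissibility of contraction in the calculus `LNS_E𝒜` (for every
`𝒜 ⊆ {M, C, N}`): if `S{Γ, A, A ⇒ Δ}` (respectively `S{Γ ⇒ Δ, A, A}`) is
derivable in `LNS_E𝒜`, then so is `S{Γ, A ⇒ Δ}` (respectively
`S{Γ ⇒ Δ, A}`). -/
theorem contraction_admissible (Ax : EAx) :
    (∀ (pre post : List Cmp) (ep : Option (Cmp × Cmp)) (Γ Δ : Multiset Fm) (A : Fm),
      ED Ax false false (pre ++ (A ::ₘ A ::ₘ Γ, Δ) :: post, ep) →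
      ED Ax false false (pre ++ (A ::ₘ Γ, Δ) :: post, ep)) ∧
    (∀ (pre post : List Cmp) (ep : Option (Cmp × Cmp)) (Γ Δ : Multiset Fm) (A : Fm),
      ED Ax false false (pre ++ (Γ, A ::ₘ A ::ₘ Δ) :: post, ep) →
      ED Ax false false (pre ++ (Γ, A ::ₘ Δ) :: post, ep)) := by
  have add_con {s : LNSe} (h : ED Ax false false s) : ED Ax true false s :=
    contraction_admissible_general h
  exact ⟨fun _ _ _ _ _ _ h ↦ contraction_admissible_general (.conL rfl (add_con h)),
    fun _ _ _ _ _ _ h ↦ contraction_admissible_general (.conR rfl (add_con h))⟩
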